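/- arXiv:2605.00996 — 2 statements merged into one kernel-verified Lean document; each statement's English description precedes it below -/
import Mathlib

section
/- Let m ≥ 2 and s ≥ 2 be integers, c = 1, n = ms + 1, ℓ = s − 1. If F ⊆ 2^{[n]} is a shifted family with ν(F) < s and deletion number d(F) = m, then F ⊆ W(m,s,s−1), i.e., every F ∈ F satisfies |F ∩ [ms−1]| ≥ m. -/
/-!
Removing a set `X` of `m - 1 < d(F)` points leaves an `(s-1)`-matching of `m`-sets outside `X`.
It covers `m(s-1)` of the `ms + 1 - (m-1) = m(s-1) + 2` remaining points, so exactly two points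
`y < z` stay free, and since `ν(F) < s` no member of `F` lies in `X ∪ {y, z}`
(`exists_free_pair`). Here `y ≤ ms` and `z ≤ ms + 1`.

Let `A ∈ F` meet `[ms-1]` in fewer than `m` points, so `|A| ≤ m + 1`; some choice of `X` gives a
contradiction in every case.
* If `|A| < m`, take `X ⊇ A`; then `A` itself lies in `X ∪ {y, z}`.
* If `|A| = m`, the maximum of `A` is at least `ms`; take `X` to be `A` without its maximum and
  shift the maximum down to `y`.
* If `|A| = m + 1`, then `A = X ∪ {ms, ms+1}` with `X ⊆ [ms-1]`; shift `ms` to `y` and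
  `ms + 1` to `z`.
-/

open Finset

/-- The ground set `[n] = {1, …, n}`. -/
def ground (n : ℕ) : Finset ℕ := Finset.Icc 1 n

/-- `F` contains a matching of size `s`: `s` pairwise disjoint member sets. -/
def HasMatching (F : Finset (Finset ℕ)) (s : ℕ) : Prop :=
  ∃ M ⊆ F, M.card = s ∧ (M : Set (Finset ℕ)).PairwiseDisjoint id

/-- `A = (a₁ < … < a_k)` can be shifted to `B = (b₁ < … < b_k)`: same size and `bᵢ ≤ aᵢ`. -/
def CanShiftTo (A B : Finset ℕ) : Prop :=
  ∃ h : B.card = A.card, ∀ i : Fin A.card,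
    B.orderEmbOfFin h i ≤ A.orderEmbOfFin (rfl : A.card = A.card) i

/-- A family of subsets of the positive integers is shifted. -/
def IsShifted (F : Finset (Finset ℕ)) : Prop :=
  ∀ A ∈ F, ∀ B : Finset ℕ, 0 ∉ B → CanShiftTo A B → B ∈ F

/-- `Q(m,s,ℓ) = {P ⊆ [ms+c] : |P| + |P ∩ [ms−c−1]| ≥ 2m}` where `ℓ = s − c`. -/
def Qfam (m s c : ℕ) : Finset (Finset ℕ) :=
  (ground (m * s + c)).powerset.filter
    (fun P => 2 * m ≤ P.card + (P ∩ ground (m * s - c - 1)).card)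

/-- `W(m,s,ℓ) = {P ⊆ [ms+c] : |P ∩ [ms−1]| ≥ m}`. -/
def Wfam (m s c : ℕ) : Finset (Finset ℕ) :=
  (ground (m * s + c)).powerset.filter
    (fun P => m ≤ (P ∩ ground (m * s - 1)).card)

/-- `P(m,s,ℓ) = {P ⊆ [ms+c] : |P| + |P ∩ [ℓ−1]| ≥ m+1}` where `ℓ = s − c`. -/
def Pfam (m s c : ℕ) : Finset (Finset ℕ) :=
  (ground (m * s + c)).powerset.filter
    (fun P => m + 1 ≤ P.card + (P ∩ ground (s - c - 1)).card)

/-- `P'(m,s,ℓ) = ⋃_{i=m+1}^n ([n] choose i) ∪ ([mℓ−1] choose m)` where `ℓ = s − c`. -/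
def P'fam (m s c : ℕ) : Finset (Finset ℕ) :=
  (ground (m * s + c)).powerset.filter
    (fun P => m + 1 ≤ P.card ∨ (P.card = m ∧ P ⊆ ground (m * (s - c) - 1)))

/-- The deletion number `d(F)`: the least size of a set `X ⊆ [n]` whose removal kills
all `ℓ`-matchings in the `m`-th layer of `F`. -/
noncomputable def delNum (n m ℓ : ℕ) (F : Finset (Finset ℕ)) : ℕ :=
  sInf {d : ℕ | ∃ X ⊆ ground n, X.card = d ∧
    ¬ HasMatching (F.filter (fun A => A.card = m ∧ A ⊆ ground n \ X)) ℓ}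

/-- `y_F(i)`: the number of `i`-element subsets of `[n]` not in `F`. -/
def yF (n : ℕ) (F : Finset (Finset ℕ)) (i : ℕ) : ℕ :=
  (((ground n).powerset.filter (fun A => A.card = i)) \ F).card

/-- Moving the elements of `A` injectively and weakly downwards, in any order, is a shift: if the
`i`-th element of the image exceeded the `i`-th element `a` of `A`, then the `i + 1` images of the
elements of `A` up to `a` would all be among the `i` smallest elements of the image. -/
lemma canShiftTo_image (A : Finset ℕ) (f : ℕ → ℕ) (hf : Set.InjOn f A)
    (hle : ∀ a ∈ A, f a ≤ a) : CanShiftTo A (A.image f) := by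
  have h : (A.image f).card = A.card := Finset.card_image_of_injOn hf
  refine ⟨h, fun i => ?_⟩
  by_contra! hlt
  set eA := A.orderEmbOfFin (rfl : A.card = A.card) with heA
  set eB := (A.image f).orderEmbOfFin h with heB
  have hmemA : ∀ j, eA j ∈ A := fun j => Finset.orderEmbOfFin_mem A rfl j
  have hsub : (Finset.Iic i).image (fun j => f (eA j)) ⊆ (Finset.Iio i).image eB := by
    intro b hb
    obtain ⟨j, hj, rfl⟩ := Finset.mem_image.1 hb
    have hb' : f (eA j) ∈ Set.range eB := by
      rw [heB, Finset.range_orderEmbOfFin]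
      exact Finset.mem_coe.2 (Finset.mem_image_of_mem f (hmemA j))
    obtain ⟨k, hk⟩ := hb'
    refine Finset.mem_image.2 ⟨k, Finset.mem_Iio.2 ?_, hk⟩
    have h1 : eA j ≤ eA i := eA.monotone (Finset.mem_Iic.1 hj)
    have h2 := hle _ (hmemA j)
    exact eB.lt_iff_lt.1 (by omega)
  have hinj : Function.Injective (fun j => f (eA j)) := fun j k hjk =>
    eA.injective (hf (hmemA j) (hmemA k) hjk)
  have h1 := Finset.card_le_card hsub
  rw [Finset.card_image_of_injective _ hinj, Finset.card_image_of_injective _ eB.injective,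
    Fin.card_Iic, Fin.card_Iio] at h1
  omega

/-- The two points left free by an `(s-1)`-matching avoiding `X`, where `|X| = m - 1 < d(F)`. -/
lemma exists_free_pair (m s : ℕ) (hm : 2 ≤ m) (hs : 2 ≤ s) (F : Finset (Finset ℕ))
    (hnu : ¬ HasMatching F s) (hdel : delNum (m * s + 1) m (s - 1) F = m)
    (X : Finset ℕ) (hX : X ⊆ ground (m * s + 1)) (hXc : X.card = m - 1) :
    ∃ y z, y < z ∧ 0 < y ∧ z ≤ m * s + 1 ∧ y ∉ X ∧ z ∉ X ∧
      ∀ B ∈ F, ¬ B ⊆ insert y (insert z X) := by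
  have hM : HasMatching (F.filter (fun A => A.card = m ∧ A ⊆ ground (m * s + 1) \ X)) (s - 1) := by
    have hlt : m - 1 < delNum (m * s + 1) m (s - 1) F := by omega
    by_contra hno
    exact Nat.notMem_of_lt_sInf hlt ⟨X, hX, hXc, hno⟩
  obtain ⟨M, hMF, hMc, hMd⟩ := hM
  have hmem : ∀ A ∈ M, A ∈ F ∧ A.card = m ∧ A ⊆ ground (m * s + 1) \ X := fun A hA => by
    simpa using hMF hA
  set U := M.biUnion id with hU
  have hUc : U.card = (s - 1) * m := by
    rw [hU, Finset.card_biUnion (fun a ha b hb hab => hMd ha hb hab),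
      Finset.sum_congr rfl (fun A hA => show (id A).card = m from (hmem A hA).2.1)]
    simp [hMc]
  have hUs : U ⊆ ground (m * s + 1) \ X :=
    Finset.biUnion_subset.2 fun A hA => (hmem A hA).2.2
  have hR : ((ground (m * s + 1) \ X) \ U).card = 2 := by
    rw [Finset.card_sdiff_of_subset hUs, Finset.card_sdiff_of_subset hX, hUc, hXc]
    obtain ⟨t, rfl⟩ : ∃ t, s = t + 1 := ⟨s - 1, by omega⟩
    have : m * (t + 1) = t * m + m := by ring
    simp only [ground, Nat.card_Icc, Nat.add_sub_cancel, this]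
    omega
  obtain ⟨y, z, hyz, hRe⟩ : ∃ y z, y < z ∧ (ground (m * s + 1) \ X) \ U = {y, z} := by
    obtain ⟨y, z, hne, hRe⟩ := Finset.card_eq_two.1 hR
    rcases lt_or_gt_of_ne hne with h | h
    · exact ⟨y, z, h, hRe⟩
    · exact ⟨z, y, h, by rw [hRe, Finset.pair_comm]⟩
  have hy : y ∈ (ground (m * s + 1) \ X) \ U := by rw [hRe]; simp
  have hz : z ∈ (ground (m * s + 1) \ X) \ U := by rw [hRe]; simp
  simp only [ground, Finset.mem_sdiff, Finset.mem_Icc] at hy hz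
  refine ⟨y, z, hyz, by omega, by omega, hy.1.2, hz.1.2, fun B hB hBs => hnu ?_⟩
  have hdisj : ∀ A ∈ M, Disjoint B A := by
    intro A hA
    rw [Finset.disjoint_left]
    intro b hb hbA
    have hbU : b ∈ U := Finset.mem_biUnion.2 ⟨A, hA, hbA⟩
    have hbX := (Finset.mem_sdiff.1 (hUs hbU)).2
    have := hBs hb
    simp only [Finset.mem_insert] at this
    rcases this with rfl | rfl | h
    · exact hy.2 hbU
    · exact hz.2 hbU
    · exact hbX h
  -- `B` could only be a member of `M` if it were empty, but members of `M` have `m > 0` elements.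
  have hBM : B ∉ M := by
    intro h
    have h0 : B = ∅ := disjoint_self.1 (hdisj B h)
    have := (hmem B h).2.1
    rw [h0, Finset.card_empty] at this
    omega
  refine ⟨insert B M, ?_, ?_, ?_⟩
  · exact Finset.insert_subset hB fun A hA => (hmem A hA).1
  · rw [Finset.card_insert_of_notMem hBM]; omega
  · rw [Finset.coe_insert]
    exact hMd.insert fun A hA _ => hdisj A hA

theorem stmt_16 (m s : ℕ) (hm : 2 ≤ m) (hs : 2 ≤ s)
    (F : Finset (Finset ℕ)) (hF : F ⊆ (ground (m * s + 1)).powerset)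
    (hshift : IsShifted F) (hnu : ¬ HasMatching F s)
    (hdel : delNum (m * s + 1) m (s - 1) F = m) :
    ∀ A ∈ F, m ≤ (A ∩ ground (m * s - 1)).card := by
  intro A hA
  by_contra! hlt
  have hAg : A ⊆ ground (m * s + 1) := Finset.mem_powerset.1 (hF hA)
  have hms : 4 ≤ m * s := Nat.mul_le_mul hm hs
  have hm_le : m ≤ m * s := Nat.le_mul_of_pos_right m (by omega)
  have hAr : ∀ a ∈ A, 1 ≤ a ∧ a ≤ m * s + 1 := fun a ha => by
    simpa [ground] using hAg ha
  have key := exists_free_pair m s hm hs F hnu hdel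
  have hshift' : ∀ f : ℕ → ℕ, Set.InjOn f A → (∀ a ∈ A, f a ≤ a ∧ 0 < f a) →
      A.image f ∈ F := by
    intro f hf hle
    refine hshift A hA _ ?_ (canShiftTo_image A f hf fun a ha => (hle a ha).1)
    intro h0
    obtain ⟨a, ha, hfa⟩ := Finset.mem_image.1 h0
    have := (hle a ha).2
    omega
  have htail : A \ ground (m * s - 1) ⊆ {m * s, m * s + 1} := by
    intro a ha
    rw [Finset.mem_sdiff] at ha
    have h1 := hAr a ha.1
    have h2 := ha.2
    simp only [ground, Finset.mem_Icc] at h2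
    simp only [Finset.mem_insert, Finset.mem_singleton]
    omega
  have hsplit := Finset.card_inter_add_card_sdiff A (ground (m * s - 1))
  have htc : ({m * s, m * s + 1} : Finset ℕ).card = 2 := Finset.card_pair (by omega)
  have htl := Finset.card_le_card htail
  rcases lt_trichotomy A.card m with hc | hc | hc
  · obtain ⟨X, hAX, hXg, hXc⟩ := Finset.exists_subsuperset_card_eq hAg
      (show A.card ≤ m - 1 by omega) (by simp only [ground, Nat.card_Icc]; omega)
    obtain ⟨y, z, -, -, -, -, -, hno⟩ := key X hXg hXc
    exact hno A hA fun a ha => by simp [hAX ha]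
  · have hne : A.Nonempty := Finset.card_pos.1 (by omega)
    obtain ⟨a₀, ha₀⟩ : (A \ ground (m * s - 1)).Nonempty := Finset.card_pos.1 (by omega)
    have hxA := A.max'_mem hne
    have hxge : m * s ≤ A.max' hne := by
      have h1 := A.le_max' a₀ (Finset.mem_sdiff.1 ha₀).1
      have h2 := htail ha₀
      simp only [Finset.mem_insert, Finset.mem_singleton] at h2
      omega
    set x := A.max' hne with hx
    obtain ⟨y, z, hyz, hy0, hz, hyX, hzX, hno⟩ := key (A.erase x)
      ((Finset.erase_subset _ _).trans hAg) (by rw [Finset.card_erase_of_mem hxA, hc])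
    have hyA : ∀ a ∈ A, a ≠ x → a ≠ y := by
      rintro a ha hax rfl
      exact hyX (Finset.mem_erase.2 ⟨hax, ha⟩)
    refine hno _ (hshift' (fun a => if a = x then y else a) ?_ ?_) ?_
    · intro a ha b hb hab
      have h1 := hyA a ha
      have h2 := hyA b hb
      simp only at hab
      split_ifs at hab <;> grind
    · intro a ha
      have := hAr a ha
      split_ifs <;> omega
    · intro b hb
      obtain ⟨a, ha, rfl⟩ := Finset.mem_image.1 hb
      split_ifs with h
      · simp
      · simp [h, ha]
  · have hXc : (A ∩ ground (m * s - 1)).card = m - 1 := by omega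
    obtain ⟨y, z, hyz, hy0, hz, hyX, hzX, hno⟩ := key _
      (Finset.inter_subset_left.trans hAg) hXc
    have hcase : ∀ a ∈ A, a ∈ A ∩ ground (m * s - 1) ∨ a = m * s ∨ a = m * s + 1 := by
      intro a ha
      by_cases h : a ∈ ground (m * s - 1)
      · exact Or.inl (Finset.mem_inter.2 ⟨ha, h⟩)
      · simpa using Or.inr (htail (Finset.mem_sdiff.2 ⟨ha, h⟩))
    refine hno _ (hshift' (fun a => if a = m * s then y else if a = m * s + 1 then z else a)
      ?_ ?_) ?_
    · intro a ha b hb hab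
      have h1 := hcase a ha
      have h2 := hcase b hb
      simp only at hab
      split_ifs at hab <;> grind
    · intro a ha
      have := hAr a ha
      split_ifs <;> omega
    · intro b hb
      obtain ⟨a, ha, rfl⟩ := Finset.mem_image.1 hb
      have h1 := hcase a ha
      split_ifs with h h'
      · simp
      · simp
      · simp only [Finset.mem_insert]
        tauto
end

section
/- Let m ≥ 2 and c ≥ 1 be fixed integers. There exist a constant K = K(m,c) and s0 = s0(m,c) such that for all s ≥ s0, with n = ms + c: every family F ⊆ 2^{[n]} with ν(F) < s satisfies |2^{[n]} ∖ F| ≥ (2c+2)·C(n, m−1) − K·s^{m−2}; equivalently, |F| ≤ 2^n − (2c+2)·C(n, m−1) + K·s^{m−2}. -/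
/-!
Put `r = m - 2`, `n = ms + c`, and suppose that fewer than `(2c+2) C(n, m-1)` subsets of `[n]` are
missing from `F`. Call a vertex heavy if it lies in at least `C(q-1, m-1) / m` missing `m`-sets,
where `q = s + c - t` for a suitable constant `t = t(m, c)`. Double counting
(`card_heavy_mul_le`) bounds the number of heavy vertices by a constant, so they lie in a set `T`
of size exactly `t`. Say that `S ⊆ T` is good if more than `t (m-1) |[n] ∖ T|^(m-2)` of the
`(m-1)`-sets `B` outside `T` satisfy `S ∪ B ∈ F`.

* If fewer than `2c+2` subsets of `T` are not good, then some `t - c` pairwise disjoint subsets of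
  `T` are good; this is the case `m = 1` of the problem (`exists_disjoint_good`). Greedily extend
  them to disjoint members of `F` (`greedy_extend`). Exactly `mq` vertices outside `T` remain; none
  of them is heavy, and an exchange argument splits them into `q` members of `F`
  (`exists_perfect_matching`). This gives `(t - c) + q = s` disjoint members of `F`, a contradiction
  (`many_bad_traces`).
* So at least `2c+2` subsets `S` of `T` are not good, and each is the trace on `T` of at least
  `C(n, m-1) - O(s^(m-2))` missing sets `S ∪ B` (`missing_bound`).
-/

open Finset

/-! ### Choosing disjoint sets greedily -/

/-- Few `(r+1)`-sets meet a bounded set `Z`: a lower-order term, used both to choose disjoint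
extensions and to compare `[n]` with the complement of the exceptional set. -/
lemma card_hitting_le (V Z : Finset ℕ) (r : ℕ) :
    ((powersetCard (r + 1) V).filter (fun B => ¬ Disjoint B Z)).card ≤ Z.card * V.card ^ r := by
  have hsub : (powersetCard (r + 1) V).filter (fun B => ¬ Disjoint B Z) ⊆
      Z.biUnion (fun z => (powersetCard r V).image (insert z)) := by
    intro B hB
    simp only [mem_filter, mem_powersetCard] at hB
    obtain ⟨⟨hBV, hBc⟩, hd⟩ := hB
    obtain ⟨z, hzB, hzZ⟩ := not_disjoint_iff.1 hd
    simp only [mem_biUnion, mem_image, mem_powersetCard]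
    exact ⟨z, hzZ, B.erase z, ⟨(erase_subset _ _).trans hBV, by
      rw [card_erase_of_mem hzB]; omega⟩, insert_erase hzB⟩
  refine (card_le_card hsub).trans (card_biUnion_le_card_mul _ _ _ fun z _ => ?_)
  refine card_image_le.trans ?_
  rw [card_powersetCard]
  exact Nat.choose_le_pow _ _

lemma hasMatching_of_list (F : Finset (Finset ℕ)) (L : List (Finset ℕ))
    (hd : L.Pairwise Disjoint) (hF : ∀ A ∈ L, A ∈ F) (hne : ∀ A ∈ L, A.Nonempty) :
    HasMatching F L.length := by
  have hnd : L.Nodup := by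
    refine hd.imp_of_mem ?_
    intro A B hA _ hAB h
    subst h
    exact (hne A hA).ne_empty (disjoint_self.1 hAB)
  refine ⟨L.toFinset, fun A hA => hF A (List.mem_toFinset.1 hA), List.toFinset_card_of_nodup hnd, ?_⟩
  intro A hA B hB hAB
  have hA' : A ∈ L := by simpa using hA
  have hB' : B ∈ L := by simpa using hB
  exact hd.forall hA' hB' hAB

/-- Greedy extension: if every `S` in a list of disjoint subsets of `T` has so many extensions
`S ∪ B ∈ F` by `(r+1)`-sets `B ⊆ V` that they cannot all be hit by `k(r+1)` points, then the `S`
extend to pairwise disjoint members of `F`; `U` is the union of the sets `B` used. -/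
lemma greedy_extend (F : Finset (Finset ℕ)) (V T : Finset ℕ) (hVT : Disjoint V T) (r k : ℕ)
    (l : List (Finset ℕ)) (hl : l.length ≤ k) (hd : l.Pairwise Disjoint) (hT : ∀ S ∈ l, S ⊆ T)
    (hbig : ∀ S ∈ l, k * (r + 1) * V.card ^ r <
      ((powersetCard (r + 1) V).filter (fun B => S ∪ B ∈ F)).card) :
    ∃ (L : List (Finset ℕ)) (U : Finset ℕ), U ⊆ V ∧ U.card = (r + 1) * l.length ∧
      L.length = l.length ∧ L.Pairwise Disjoint ∧
      ∀ A ∈ L, A ∈ F ∧ A.Nonempty ∧ ∃ S ∈ l, A ⊆ S ∪ U := by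
  induction l with
  | nil => exact ⟨[], ∅, by simp⟩
  | cons S l ih =>
    simp only [List.length_cons] at hl
    rw [List.pairwise_cons] at hd
    obtain ⟨L, U, hUV, hUc, hLl, hLd, hL⟩ := ih (by omega) hd.2
      (fun S' h => hT S' (List.mem_cons_of_mem _ h)) (fun S' h => hbig S' (List.mem_cons_of_mem _ h))
    have hST := hT S List.mem_cons_self
    obtain ⟨B, hB1, hB2⟩ : ∃ B ∈ (powersetCard (r + 1) V).filter (fun B => S ∪ B ∈ F),
        Disjoint B U := by
      by_contra! hcon
      have h1 : ((powersetCard (r + 1) V).filter (fun B => S ∪ B ∈ F)).card ≤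
          ((powersetCard (r + 1) V).filter (fun B => ¬ Disjoint B U)).card := by
        refine card_le_card fun B hB => ?_
        exact mem_filter.2 ⟨(mem_filter.1 hB).1, hcon B hB⟩
      have h2 := card_hitting_le V U r
      have h3 := hbig S List.mem_cons_self
      have h4 : U.card * V.card ^ r ≤ k * (r + 1) * V.card ^ r := by
        refine Nat.mul_le_mul_right _ ?_
        rw [hUc, mul_comm]
        exact Nat.mul_le_mul_right _ (by omega)
      omega
    simp only [mem_filter, mem_powersetCard] at hB1
    obtain ⟨⟨hBV, hBc⟩, hSB⟩ := hB1
    refine ⟨(S ∪ B) :: L, B ∪ U, union_subset hBV hUV, ?_, by simp [hLl], ?_, ?_⟩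
    · rw [card_union_of_disjoint hB2, hBc, hUc, List.length_cons]; ring
    · refine List.pairwise_cons.2 ⟨fun A hA => ?_, hLd⟩
      obtain ⟨-, -, S', hS', hAS'⟩ := hL A hA
      refine Disjoint.mono_right hAS' ?_
      rw [disjoint_union_left, disjoint_union_right, disjoint_union_right]
      have hS'T := hT S' (List.mem_cons_of_mem _ hS')
      exact ⟨⟨hd.1 S' hS', (hVT.mono hUV hST).symm⟩, hVT.mono hBV hS'T, hB2⟩
    · intro A hA
      rcases List.mem_cons.1 hA with rfl | hA
      · refine ⟨hSB, ?_, S, List.mem_cons_self, ?_⟩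
        · have : B.Nonempty := card_pos.1 (by omega)
          exact this.mono subset_union_right
        · exact union_subset_union_right subset_union_left
      · obtain ⟨h1, h2, S', hS', h3⟩ := hL A hA
        exact ⟨h1, h2, S', List.mem_cons_of_mem _ hS',
          h3.trans (union_subset_union_right subset_union_right)⟩

/-! ### Matchings in an exceptional set of bounded size -/

/-- A graph on `B` with at most `|B| - 2r` non-edges has `r` disjoint edges: as long as `r ≥ 1`
some pair at a fixed vertex is an edge, and deleting it preserves the hypothesis. -/
lemma exists_disjoint_pairs (g : Finset ℕ → Prop) [DecidablePred g] (r : ℕ) :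
    ∀ B : Finset ℕ, 2 * r + ((powersetCard 2 B).filter (fun P => ¬ g P)).card ≤ B.card →
      ∃ l : List (Finset ℕ), l.length = r ∧ l.Pairwise Disjoint ∧ ∀ P ∈ l, P ⊆ B ∧ g P := by
  induction r with
  | zero => intro B _; exact ⟨[], by simp⟩
  | succ r ih =>
    intro B hB
    obtain ⟨x, hx⟩ : B.Nonempty := card_pos.1 (by omega)
    obtain ⟨y, hy, hg⟩ : ∃ y ∈ B.erase x, g {x, y} := by
      by_contra! hcon
      have : (B.erase x).card ≤ ((powersetCard 2 B).filter (fun P => ¬ g P)).card := by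
        refine card_le_card_of_injOn (fun y => {x, y}) ?_ ?_
        · intro y hy
          have hy' := mem_erase.1 hy
          simp only [coe_filter, Set.mem_ofPred_eq, mem_powersetCard]
          refine ⟨⟨?_, card_pair hy'.1.symm⟩, hcon y hy⟩
          intro z hz
          rcases mem_insert.1 hz with rfl | hz
          · exact hx
          · rw [mem_singleton.1 hz]; exact hy'.2
        · intro y hy z hz hyz
          have hy' := (mem_erase.1 hy).1
          have : y ∈ ({x, z} : Finset ℕ) := by
            rw [← show ({x, y} : Finset ℕ) = {x, z} from hyz]; simp
          simpa [hy'] using this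
      rw [card_erase_of_mem hx] at this
      omega
    have hy' := mem_erase.1 hy
    have hpB : ({x, y} : Finset ℕ) ⊆ B := by
      intro z hz
      rcases mem_insert.1 hz with rfl | hz
      · exact hx
      · rw [mem_singleton.1 hz]; exact hy'.2
    have hc : (B \ {x, y}).card = B.card - 2 := by
      rw [card_sdiff_of_subset hpB, card_pair hy'.1.symm]
    have hle : ((powersetCard 2 (B \ {x, y})).filter (fun P => ¬ g P)).card ≤
        ((powersetCard 2 B).filter (fun P => ¬ g P)).card :=
      card_le_card (filter_subset_filter _ (powersetCard_mono sdiff_subset))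
    obtain ⟨l, hl, hd, hP⟩ := ih (B \ {x, y}) (by omega)
    refine ⟨{x, y} :: l, by simp [hl], List.pairwise_cons.2 ⟨fun P h => ?_, hd⟩, ?_⟩
    · exact disjoint_sdiff.mono_right (hP P h).1
    · intro P h
      rcases List.mem_cons.1 h with rfl | h
      · exact ⟨hpB, hg⟩
      · exact ⟨(hP P h).1.trans sdiff_subset, (hP P h).2⟩

/-- The case `m = 1` of the theorem, with the empty set allowed to be used repeatedly: if fewer
than `2c+2` subsets of `T` fail `g`, then `|T| - c` disjoint subsets of `T` satisfy `g`. -/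
lemma exists_disjoint_good (g : Finset ℕ → Prop) [DecidablePred g] (T : Finset ℕ) (c : ℕ)
    (h : (T.powerset.filter (fun S => ¬ g S)).card < 2 * c + 2) :
    ∃ l : List (Finset ℕ), l.length = T.card - c ∧ l.Pairwise Disjoint ∧
      ∀ S ∈ l, S ⊆ T ∧ g S := by
  by_cases h0 : g ∅
  · refine ⟨List.replicate (T.card - c) ∅, by simp, ?_, ?_⟩
    · rw [List.pairwise_replicate]; right; simp
    · intro S hS
      rw [List.eq_of_mem_replicate hS]
      exact ⟨empty_subset _, h0⟩
  set B := T.filter (fun x => ¬ g {x}) with hB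
  have hBT : B ⊆ T := filter_subset _ _
  -- The empty set, the failing singletons and the failing pairs inside `B` are distinct failures.
  have hcount : 1 + B.card + ((powersetCard 2 B).filter (fun P => ¬ g P)).card ≤
      (T.powerset.filter (fun S => ¬ g S)).card := by
    have hd1 : Disjoint ({∅} : Finset (Finset ℕ)) (B.image singleton) := by
      rw [disjoint_singleton_left]; simp
    have hd2 : Disjoint (({∅} : Finset (Finset ℕ)) ∪ B.image singleton)
        ((powersetCard 2 B).filter (fun P => ¬ g P)) := by
      rw [disjoint_left]
      intro S hS hS'
      have h2 := (mem_powersetCard.1 (mem_filter.1 hS').1).2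
      rcases mem_union.1 hS with hS | hS
      · rw [mem_singleton.1 hS] at h2; simp at h2
      · obtain ⟨x, -, rfl⟩ := mem_image.1 hS
        simp at h2
    have hcard : (B.image (singleton : ℕ → Finset ℕ)).card = B.card :=
      card_image_of_injective _ singleton_injective
    rw [← hcard, ← card_singleton (∅ : Finset ℕ), ← card_union_of_disjoint hd1,
      ← card_union_of_disjoint hd2]
    refine card_le_card (union_subset (union_subset ?_ ?_) ?_)
    · simpa using h0
    · intro S hS
      obtain ⟨x, hx, rfl⟩ := mem_image.1 hS
      have := mem_filter.1 hx
      simpa using this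
    · intro S hS
      have h1 := mem_filter.1 hS
      have h2 := mem_powersetCard.1 h1.1
      exact mem_filter.2 ⟨mem_powerset.2 (h2.1.trans hBT), h1.2⟩
  obtain ⟨l, hl, hd, hP⟩ : ∃ l : List (Finset ℕ), l.length = B.card - c ∧
      l.Pairwise Disjoint ∧ ∀ P ∈ l, P ⊆ B ∧ g P := by
    by_cases hBc : B.card ≤ c
    · exact ⟨[], by simp; omega, by simp, by simp⟩
    · exact exists_disjoint_pairs g (B.card - c) B (by omega)
  have hTB : (T \ B).card = T.card - B.card := card_sdiff_of_subset hBT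
  obtain ⟨X, hX, hXc⟩ := exists_subset_card_eq
    (s := T \ B) (n := min (T.card - c) (T.card - B.card)) (by rw [hTB]; exact min_le_right _ _)
  have hBc := card_le_card hBT
  refine ⟨X.toList.map singleton ++ l, ?_, ?_, ?_⟩
  · simp only [List.length_append, List.length_map, length_toList, hXc, hl]
    omega
  · rw [List.pairwise_append]
    refine ⟨?_, hd, ?_⟩
    · rw [List.pairwise_map]
      refine (nodup_toList X).imp ?_
      intro a b hab
      simpa using hab
    · intro S hS P hPl
      obtain ⟨x, hx, rfl⟩ := List.mem_map.1 hS
      have hx' := hX (mem_toList.1 hx)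
      rw [disjoint_singleton_left]
      intro hxP
      exact (mem_sdiff.1 hx').2 ((hP P hPl).1 hxP)
  · intro S hS
    rcases List.mem_append.1 hS with hS | hS
    · obtain ⟨x, hx, rfl⟩ := List.mem_map.1 hS
      have hx' := mem_sdiff.1 (hX (mem_toList.1 hx))
      refine ⟨by simpa using hx'.1, ?_⟩
      by_contra hg
      exact hx'.2 (mem_filter.2 ⟨hx'.1, hg⟩)
    · exact ⟨(hP S hS).1.trans hBT, (hP S hS).2⟩

/-! ### Perfect matchings when every vertex is in few missing sets -/

/-- The `j`-th block of the partition of `W` into `q` sets of size `m` encoded by the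
bijection `e`. -/
def block {q m : ℕ} {W : Finset ℕ} (e : Fin q × Fin m ≃ W) (j : Fin q) : Finset ℕ :=
  univ.image (fun i => (e (j, i) : ℕ))

/-- For `φ : K ≃ Fin m`, the involution of the grid `Fin q × Fin m` which transposes the square
formed by the rows in `K` and fixes all other rows. -/
def transposeRows {q m : ℕ} (K : Finset (Fin q)) (φ : K ≃ Fin m) :
    Equiv.Perm (Fin q × Fin m) :=
  Function.Involutive.toPerm
    (fun p => if h : p.1 ∈ K then ((φ.symm p.2 : Fin q), φ ⟨p.1, h⟩) else p) (by
      rintro ⟨j, i⟩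
      by_cases h : j ∈ K
      · simp [h]
      · simp [h])

lemma transposeRows_of_mem {q m : ℕ} (K : Finset (Fin q)) (φ : K ≃ Fin m) (j : Fin q) (i : Fin m)
    (h : j ∈ K) : transposeRows K φ (j, i) = ((φ.symm i : Fin q), φ ⟨j, h⟩) :=
  dif_pos h

lemma transposeRows_of_notMem {q m : ℕ} (K : Finset (Fin q)) (φ : K ≃ Fin m) (j : Fin q)
    (i : Fin m) (h : j ∉ K) : transposeRows K φ (j, i) = (j, i) :=
  dif_neg h

/-- Take a partition of `W` into `m`-sets with the most blocks in `F`. A block `j₀` outside `F`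
together with `m - 1` other blocks forms an `m × m` grid; by the degree hypothesis some choice of
the other blocks has all columns of the grid in `F`, and replacing rows by columns is an
improvement. -/
lemma exists_perfect_matching (F : Finset (Finset ℕ)) (m q : ℕ) (W : Finset ℕ)
    (hm : 1 ≤ m) (hW : W.card = m * q)
    (hdeg : ∀ v ∈ W, m * ((powersetCard m W).filter (fun A => v ∈ A ∧ A ∉ F)).card <
      (q - 1).choose (m - 1)) :
    ∃ L : List (Finset ℕ), L.length = q ∧ L.Pairwise Disjoint ∧
      ∀ A ∈ L, A ∈ F ∧ A.Nonempty ∧ A ⊆ W := by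
  have hcard : Fintype.card (Fin q × Fin m) = Fintype.card W := by
    simp [hW, mul_comm]
  obtain ⟨e, -, he⟩ := exists_max_image (univ : Finset (Fin q × Fin m ≃ W))
    (fun e => (univ.filter (fun j => block e j ∈ F)).card) ⟨Fintype.equivOfCardEq hcard, mem_univ _⟩
  have hall : ∀ j, block e j ∈ F := by
    by_contra! hcon
    obtain ⟨j0, hj0⟩ := hcon
    let col : Finset (Fin q) → Fin m → Finset ℕ := fun J i =>
      (insert j0 J).image (fun j => (e (j, i) : ℕ))
    have hinj : ∀ i : Fin m, Function.Injective (fun j => (e (j, i) : ℕ)) := by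
      intro i a b hab
      have := e.injective (Subtype.ext hab)
      simpa using this
    have hJ : ∃ J ∈ powersetCard (m - 1) (univ.erase j0), ∀ i, col J i ∈ F := by
      by_contra! hbad
      have h1 : powersetCard (m - 1) (univ.erase j0) ⊆ (univ : Finset (Fin m)).biUnion
          (fun i => (powersetCard (m - 1) (univ.erase j0)).filter (fun J => col J i ∉ F)) := by
        intro J hJ
        obtain ⟨i, hi⟩ := hbad J hJ
        exact mem_biUnion.2 ⟨i, mem_univ _, mem_filter.2 ⟨hJ, hi⟩⟩
      have h2 := (card_le_card h1).trans card_biUnion_le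
      rw [card_powersetCard, card_erase_of_mem (mem_univ _), card_univ, Fintype.card_fin] at h2
      have h3 : ∀ i ∈ (univ : Finset (Fin m)),
          m * ((powersetCard (m - 1) (univ.erase j0)).filter (fun J => col J i ∉ F)).card ≤
          (q - 1).choose (m - 1) - 1 := by
        intro i _
        have h4 := hdeg (e (j0, i)) (e (j0, i)).2
        have h5 : ((powersetCard (m - 1) (univ.erase j0)).filter (fun J => col J i ∉ F)).card ≤
            ((powersetCard m W).filter (fun A => (e (j0, i) : ℕ) ∈ A ∧ A ∉ F)).card := by
          refine card_le_card_of_injOn (fun J => col J i) ?_ ?_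
          · intro J hJ
            have h6 := mem_filter.1 hJ
            have h7 := mem_powersetCard.1 h6.1
            have h8 : j0 ∉ J := fun h => (mem_erase.1 (h7.1 h)).1 rfl
            refine mem_filter.2 ⟨mem_powersetCard.2 ⟨?_, ?_⟩, ?_, h6.2⟩
            · intro x hx
              obtain ⟨j, -, rfl⟩ := mem_image.1 hx
              exact (e (j, i)).2
            · rw [card_image_of_injective _ (hinj i), card_insert_of_notMem h8, h7.2]; omega
            · exact mem_image.2 ⟨j0, mem_insert_self _ _, rfl⟩
          · intro J hJ J' hJ' hJJ
            have h7 := (mem_powersetCard.1 (mem_filter.1 hJ).1).1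
            have h7' := (mem_powersetCard.1 (mem_filter.1 hJ').1).1
            have h8 : j0 ∉ J := fun h => (mem_erase.1 (h7 h)).1 rfl
            have h8' : j0 ∉ J' := fun h => (mem_erase.1 (h7' h)).1 rfl
            have := image_injective (hinj i) hJJ
            rw [← erase_insert h8, ← erase_insert h8', this]
        have := Nat.mul_le_mul_left m h5
        omega
      have h4 := sum_le_sum h3
      rw [← mul_sum, sum_const, card_univ, Fintype.card_fin, smul_eq_mul] at h4
      have h5 := Nat.le_of_mul_le_mul_left h4 (by omega)
      have h6 := hdeg (e (j0, ⟨0, hm⟩)) (e (j0, ⟨0, hm⟩)).2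
      omega
    obtain ⟨J, hJm, hJ⟩ := hJ
    have h7 := mem_powersetCard.1 hJm
    have h8 : j0 ∉ J := fun h => (mem_erase.1 (h7.1 h)).1 rfl
    have hKc : (insert j0 J).card = m := by rw [card_insert_of_notMem h8, h7.2]; omega
    let φ : (insert j0 J : Finset (Fin q)) ≃ Fin m := equivFinOfCardEq hKc
    let e' := (transposeRows (insert j0 J) φ).trans e
    have hin : ∀ j (h : j ∈ insert j0 J), block e' j = col J (φ ⟨j, h⟩) := by
      intro j h
      ext x
      simp only [block, col, e', mem_image, mem_univ, true_and, Equiv.trans_apply,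
        transposeRows_of_mem _ φ j _ h]
      constructor
      · rintro ⟨i, rfl⟩
        exact ⟨φ.symm i, (φ.symm i).2, rfl⟩
      · rintro ⟨k, hk, rfl⟩
        exact ⟨φ ⟨k, hk⟩, by simp⟩
    have hout : ∀ j, j ∉ insert j0 J → block e' j = block e j := by
      intro j h
      simp only [block, e', Equiv.trans_apply, transposeRows_of_notMem _ φ j _ h]
    have hlt : (univ.filter (fun j => block e j ∈ F)).card <
        (univ.filter (fun j => block e' j ∈ F)).card := by
      refine card_lt_card ((ssubset_iff_of_subset ?_).2 ⟨j0, ?_, ?_⟩)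
      · intro j hj
        refine mem_filter.2 ⟨mem_univ _, ?_⟩
        by_cases h : j ∈ insert j0 J
        · rw [hin j h]; exact hJ _
        · rw [hout j h]; exact (mem_filter.1 hj).2
      · refine mem_filter.2 ⟨mem_univ _, ?_⟩
        rw [hin j0 (mem_insert_self _ _)]; exact hJ _
      · intro h; exact hj0 (mem_filter.1 h).2
    exact absurd (he e' (mem_univ _)) (not_le.2 hlt)
  refine ⟨List.ofFn (block e), by simp, ?_, ?_⟩
  · rw [List.pairwise_ofFn]
    intro j k hjk
    rw [disjoint_left]
    intro x hx hx'
    obtain ⟨i, -, rfl⟩ := mem_image.1 hx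
    obtain ⟨i', -, h⟩ := mem_image.1 hx'
    have := e.injective (Subtype.ext h)
    simp only [Prod.mk.injEq] at this
    exact hjk.ne this.1.symm
  · intro A hA
    obtain ⟨j, rfl⟩ := (List.mem_ofFn' _ _).1 hA
    refine ⟨hall j, ⟨_, mem_image.2 ⟨⟨0, hm⟩, mem_univ _, rfl⟩⟩, ?_⟩
    intro x hx
    obtain ⟨i, -, rfl⟩ := mem_image.1 hx
    exact (e (j, i)).2

/-! ### Counting missing sets -/

/-- Double counting of incidences: `b` vertices, each in at least `C / m` missing `m`-sets,
force `b C ≤ m² |missing sets|`. -/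
lemma card_heavy_mul_le (F : Finset (Finset ℕ)) (N : Finset ℕ) (m C : ℕ) :
    (N.filter (fun v => C ≤ m * ((powersetCard m N).filter (fun A => v ∈ A ∧ A ∉ F)).card)).card
      * C ≤ m ^ 2 * (N.powerset \ F).card := by
  set X := N.filter (fun v =>
    C ≤ m * ((powersetCard m N).filter (fun A => v ∈ A ∧ A ∉ F)).card) with hX
  set G := (powersetCard m N).filter (fun A => A ∉ F) with hG
  have h1 : X.card * C ≤ ∑ v ∈ X, m * (G.filter (fun A => v ∈ A)).card := by
    rw [← smul_eq_mul]
    refine card_nsmul_le_sum _ _ _ fun v hv => ?_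
    have h := (mem_filter.1 hv).2
    have h' : (powersetCard m N).filter (fun A => v ∈ A ∧ A ∉ F) = G.filter (fun A => v ∈ A) := by
      rw [hG, filter_filter]
      exact filter_congr fun A _ => and_comm
    rwa [h'] at h
  have h2 : ∑ v ∈ X, (G.filter (fun A => v ∈ A)).card =
      ∑ A ∈ G, (X.filter (fun v => v ∈ A)).card :=
    sum_card_bipartiteAbove_eq_sum_card_bipartiteBelow (fun v A => v ∈ A)
  have h3 : ∑ A ∈ G, (X.filter (fun v => v ∈ A)).card ≤ G.card * m := by
    rw [← smul_eq_mul]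
    refine sum_le_card_nsmul _ _ _ fun A hA => ?_
    rw [← (mem_powersetCard.1 (mem_filter.1 hA).1).2]
    exact card_le_card fun v hv => (mem_filter.1 hv).2
  have h4 : G.card ≤ (N.powerset \ F).card := by
    refine card_le_card fun A hA => ?_
    have := mem_filter.1 hA
    exact mem_sdiff.2 ⟨mem_powerset.2 (mem_powersetCard.1 this.1).1, this.2⟩
  rw [← mul_sum, h2] at h1
  calc X.card * C ≤ m * (G.card * m) := h1.trans (Nat.mul_le_mul_left _ h3)
    _ = m ^ 2 * G.card := by ring
    _ ≤ _ := Nat.mul_le_mul_left _ h4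

/-- Missing sets with different traces `S` on `T` are different. -/
lemma sum_missing_le (F : Finset (Finset ℕ)) (N T : Finset ℕ) (hT : T ⊆ N) (k : ℕ)
    (X : Finset (Finset ℕ)) (hX : X ⊆ T.powerset) :
    ∑ S ∈ X, ((powersetCard k (N \ T)).filter (fun B => S ∪ B ∉ F)).card ≤
      (N.powerset \ F).card := by
  rw [← card_sigma]
  refine card_le_card_of_injOn (fun p => p.1 ∪ p.2) ?_ ?_
  · rintro ⟨S, B⟩ h
    simp only [coe_sigma, Set.mem_sigma_iff, mem_coe, mem_filter, mem_powersetCard] at h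
    have hS := mem_powerset.1 (hX h.1)
    exact mem_sdiff.2 ⟨mem_powerset.2 (union_subset (hS.trans hT) (h.2.1.1.trans sdiff_subset)),
      h.2.2⟩
  · rintro ⟨S, B⟩ h ⟨S', B'⟩ h' heq
    simp only [coe_sigma, Set.mem_sigma_iff, mem_coe, mem_filter, mem_powersetCard] at h h'
    have hS := mem_powerset.1 (hX h.1)
    have hS' := mem_powerset.1 (hX h'.1)
    have hB := h.2.1.1
    have hB' := h'.2.1.1
    simp only [Finset.ext_iff, mem_union] at heq
    have e1 : S = S' := by
      ext x
      have := heq x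
      have := @hS x
      have := @hS' x
      have := @hB x
      have := @hB' x
      simp only [mem_sdiff] at *
      tauto
    have e2 : B = B' := by
      ext x
      have := heq x
      have := @hS x
      have := @hS' x
      have := @hB x
      have := @hB' x
      simp only [mem_sdiff] at *
      tauto
    rw [e1, e2]

/-- The combinatorial core: `T` contains all heavy vertices. If fewer than `2c+2` traces on `T`
had few extensions in `F`, then `F` would contain `s` disjoint sets. -/
lemma many_bad_traces (r c s : ℕ) (F : Finset (Finset ℕ)) (N T : Finset ℕ)
    (hN : N.card = (r + 2) * s + c) (hT : T ⊆ N) (hTc : 2 * c + 2 ≤ T.card) (hTs : T.card ≤ s)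
    (hlight : ∀ v ∈ N, v ∉ T →
      (r + 2) * ((powersetCard (r + 2) N).filter (fun A => v ∈ A ∧ A ∉ F)).card <
        (s + c - T.card - 1).choose (r + 1))
    (hF : ¬ HasMatching F s) :
    2 * c + 2 ≤ (T.powerset.filter (fun S =>
      ¬ T.card * (r + 1) * (N \ T).card ^ r <
        ((powersetCard (r + 1) (N \ T)).filter (fun B => S ∪ B ∈ F)).card)).card := by
  by_contra hcon
  rw [not_le] at hcon
  apply hF
  obtain ⟨l, hl, hd, hg⟩ := exists_disjoint_good _ T c hcon
  obtain ⟨L, U, hU, hUc, hLl, hLd, hL⟩ := greedy_extend F (N \ T) T sdiff_disjoint r T.card l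
    (by omega) hd (fun S h => (hg S h).1) (fun S h => (hg S h).2)
  have hNT : (N \ T).card = (r + 2) * s + c - T.card := by rw [card_sdiff_of_subset hT, hN]
  have hW : ((N \ T) \ U).card = (r + 2) * (s + c - T.card) := by
    rw [card_sdiff_of_subset hU, hNT, hUc, hl]
    obtain ⟨a, ha⟩ : ∃ a, T.card = c + a := ⟨T.card - c, by omega⟩
    obtain ⟨b, rfl⟩ : ∃ b, s = a + b := ⟨s - a, by omega⟩
    rw [ha, show c + a - c = a by omega, show a + b + c - (c + a) = b by omega]
    have : (r + 2) * (a + b) + c = (r + 2) * b + (r + 1) * a + (c + a) := by ring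
    omega
  obtain ⟨L', hL'l, hL'd, hL'⟩ := exists_perfect_matching F (r + 2) (s + c - T.card) ((N \ T) \ U)
    (by omega) hW (by
      intro v hv
      have hv1 := mem_sdiff.1 (mem_sdiff.1 hv).1
      refine lt_of_le_of_lt (Nat.mul_le_mul_left _ (card_le_card ?_)) (hlight v hv1.1 hv1.2)
      exact filter_subset_filter _ (powersetCard_mono (sdiff_subset.trans sdiff_subset)))
  have key := hasMatching_of_list F (L ++ L') (by
      rw [List.pairwise_append]
      refine ⟨hLd, hL'd, fun A hA B hB => ?_⟩
      obtain ⟨-, -, S, hS, hAS⟩ := hL A hA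
      refine Disjoint.mono hAS (hL' B hB).2.2 ?_
      rw [disjoint_union_left]
      exact ⟨(disjoint_sdiff.mono_left (hg S hS).1).mono_right sdiff_subset, disjoint_sdiff⟩)
    (by
      intro A hA
      rcases List.mem_append.1 hA with h | h
      · exact (hL A h).1
      · exact (hL' A h).1)
    (by
      intro A hA
      rcases List.mem_append.1 hA with h | h
      · exact (hL A h).2.1
      · exact (hL' A h).2.1)
  have hlen : (L ++ L').length = s := by
    rw [List.length_append, hLl, hL'l, hl]; omega
  rwa [hlen] at key

/-- Each bad trace `S` has all but `O(|N|^r)` of its extensions by `(r+1)`-sets missing from `F`. -/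
lemma missing_bound (r c : ℕ) (F : Finset (Finset ℕ)) (N T : Finset ℕ) (hT : T ⊆ N)
    (h : 2 * c + 2 ≤ (T.powerset.filter (fun S =>
      ¬ T.card * (r + 1) * (N \ T).card ^ r <
        ((powersetCard (r + 1) (N \ T)).filter (fun B => S ∪ B ∈ F)).card)).card) :
    (2 * c + 2) * N.card.choose (r + 1) ≤
      (N.powerset \ F).card + (2 * c + 2) * (T.card * (r + 2) * N.card ^ r) := by
  obtain ⟨X, hX, hXc⟩ := exists_subset_card_eq h
  have h1 := sum_missing_le F N T hT (r + 1) X (hX.trans (filter_subset _ _))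
  have hle : (N \ T).card ^ r ≤ N.card ^ r :=
    Nat.pow_le_pow_left (card_le_card sdiff_subset) r
  have h2 : ∀ S ∈ X, N.card.choose (r + 1) ≤
      ((powersetCard (r + 1) (N \ T)).filter (fun B => S ∪ B ∉ F)).card +
        T.card * (r + 2) * N.card ^ r := by
    intro S hS
    have h3 := (mem_filter.1 (hX hS)).2
    have h4 := card_filter_add_card_filter_not (s := powersetCard (r + 1) (N \ T))
      (fun B => S ∪ B ∈ F)
    have h5 := card_filter_add_card_filter_not (s := powersetCard (r + 1) N)
      (fun B => Disjoint B T)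
    have h6 := card_hitting_le N T r
    have h7 : ((powersetCard (r + 1) N).filter (fun B => Disjoint B T)).card ≤
        (powersetCard (r + 1) (N \ T)).card := by
      refine card_le_card fun B hB => ?_
      have h8 := mem_filter.1 hB
      have h9 := mem_powersetCard.1 h8.1
      exact mem_powersetCard.2 ⟨subset_sdiff.2 ⟨h9.1, h8.2⟩, h9.2⟩
    have h10 : T.card * (r + 1) * (N \ T).card ^ r ≤ T.card * (r + 1) * N.card ^ r :=
      Nat.mul_le_mul_left _ hle
    have h11 : T.card * (r + 2) * N.card ^ r =
        T.card * (r + 1) * N.card ^ r + T.card * N.card ^ r := by ring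
    rw [card_powersetCard r.succ N] at h5
    simp only [Nat.succ_eq_add_one] at h5
    omega
  have h3 := sum_le_sum h2
  rw [sum_const, sum_add_distrib, sum_const, hXc, smul_eq_mul, smul_eq_mul] at h3
  omega

theorem stmt_17 (m c : ℕ) (hm : 2 ≤ m) (hc : 1 ≤ c) :
    ∃ K s0 : ℕ, ∀ s : ℕ, s0 ≤ s →
      ∀ F : Finset (Finset ℕ), F ⊆ (ground (m * s + c)).powerset →
        ¬ HasMatching F s →
          (2 * c + 2) * (m * s + c).choose (m - 1) ≤
            ((ground (m * s + c)).powerset \ F).card + K * s ^ (m - 2) := by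
  obtain ⟨r, rfl⟩ : ∃ r, m = r + 2 := ⟨m - 2, by omega⟩
  -- `t0` bounds the number of heavy vertices.
  set t0 := (r + 2) ^ 2 * (2 * c + 2) * (r + 2 + c) ^ (r + 1) * ((r + 1).factorial * 2 ^ (r + 1))
    with ht0
  set t := t0 + (2 * c + 2) with ht
  refine ⟨(2 * c + 2) * (t * (r + 2) * (r + 2 + c) ^ r), 2 * (t + r + 1), ?_⟩
  intro s hs F _ hM
  simp only [show r + 2 - 1 = r + 1 by omega, show r + 2 - 2 = r by omega]
  set N := ground ((r + 2) * s + c) with hNdef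
  have hN : N.card = (r + 2) * s + c := by simp [hNdef, ground]
  by_cases hsmall : (2 * c + 2) * ((r + 2) * s + c).choose (r + 1) ≤ (N.powerset \ F).card
  · omega
  have hns : (r + 2) * s + c ≤ (r + 2 + c) * s := by nlinarith
  set C := (s + c - t - 1).choose (r + 1) with hC
  set X := N.filter (fun v =>
    C ≤ (r + 2) * ((powersetCard (r + 2) N).filter (fun A => v ∈ A ∧ A ∉ F)).card) with hX
  have hXC : X.card * C ≤ (r + 2) ^ 2 * (N.powerset \ F).card := card_heavy_mul_le F N (r + 2) C
  have hClow : s ^ (r + 1) ≤ C * ((r + 1).factorial * 2 ^ (r + 1)) := by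
    have h1 : (s + c - t - 1 + 1 - (r + 1)) ^ (r + 1) ≤ (r + 1).factorial * C := by
      rw [hC, ← Nat.descFactorial_eq_factorial_mul_choose]
      exact Nat.pow_sub_le_descFactorial _ _
    calc s ^ (r + 1) ≤ (2 * (s + c - t - 1 + 1 - (r + 1))) ^ (r + 1) :=
          Nat.pow_le_pow_left (by omega) _
      _ = 2 ^ (r + 1) * (s + c - t - 1 + 1 - (r + 1)) ^ (r + 1) := mul_pow _ _ _
      _ ≤ 2 ^ (r + 1) * ((r + 1).factorial * C) := Nat.mul_le_mul_left _ h1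
      _ = _ := by ring
  have hXt : X.card ≤ t0 := by
    have hspos : 0 < s ^ (r + 1) := Nat.pow_pos (by omega)
    refine Nat.le_of_mul_le_mul_right ?_ hspos
    have hch : ((r + 2) * s + c).choose (r + 1) ≤ ((r + 2 + c) * s) ^ (r + 1) :=
      (Nat.choose_le_pow _ _).trans (Nat.pow_le_pow_left hns _)
    calc X.card * s ^ (r + 1) ≤ X.card * (C * ((r + 1).factorial * 2 ^ (r + 1))) :=
          Nat.mul_le_mul_left _ hClow
      _ = X.card * C * ((r + 1).factorial * 2 ^ (r + 1)) := by ring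
      _ ≤ (r + 2) ^ 2 * ((2 * c + 2) * ((r + 2 + c) * s) ^ (r + 1)) *
            ((r + 1).factorial * 2 ^ (r + 1)) := by
          refine Nat.mul_le_mul_right _ (hXC.trans (Nat.mul_le_mul_left _ ?_))
          exact (le_of_not_ge hsmall).trans (Nat.mul_le_mul_left _ hch)
      _ = t0 * s ^ (r + 1) := by rw [ht0, mul_pow]; ring
  obtain ⟨T, hXT, hTN, hTc⟩ := exists_subsuperset_card_eq (s := X) (t := N) (n := t)
    (filter_subset _ _) (by omega) (by rw [hN]; nlinarith)
  have hbad := many_bad_traces r c s F N T hN hTN (by omega) (by omega) (by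
    intro v hv hvT
    by_contra! hge
    rw [hTc] at hge
    exact hvT (hXT (mem_filter.2 ⟨hv, hge⟩))) hM
  have hfin := missing_bound r c F N T hTN hbad
  rw [hN, hTc] at hfin
  refine hfin.trans (Nat.add_le_add_left ?_ _)
  calc (2 * c + 2) * (t * (r + 2) * ((r + 2) * s + c) ^ r)
      ≤ (2 * c + 2) * (t * (r + 2) * ((r + 2 + c) * s) ^ r) :=
        Nat.mul_le_mul_left _ (Nat.mul_le_mul_left _ (Nat.pow_le_pow_left hns _))
    _ = _ := by rw [mul_pow]; ring
end
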